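/- arXiv:1602.00027 — 2 statements merged into one kernel-verified Lean document; each statement's English description precedes it below -/
import Mathlib

section
/- Let V be a finite set, A a symmetric V×V matrix over the two-element field F₂, and T ⊆ V any subset. Then the twist N(A) * T = (V; {U Δ T : U ⊆ V, the principal submatrix A_U is invertible over F₂}) of the nondegeneracy set system of A is a delta-matroid. (In particular every binary delta-matroid is a delta-matroid.) -/
open scoped symmDiff

variable {α : Type*} [DecidableEq α]

/-- A (proper) delta-matroid: a nonempty collection `Φ` of subsets of the ground set `E`
satisfying the Symmetric Exchange Axiom. -/
def IsDeltaMatroid (E : Finset α) (Φ : Set (Finset α)) : Prop :=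
  Φ.Nonempty ∧ (∀ φ ∈ Φ, φ ⊆ E) ∧
    ∀ φ₁ ∈ Φ, ∀ φ₂ ∈ Φ, ∀ e ∈ φ₁ ∆ φ₂, ∃ e' ∈ φ₁ ∆ φ₂, φ₁ ∆ ({e, e'} : Finset α) ∈ Φ

/-- The principal submatrix of `A` with rows and columns indexed by `U`. -/
def principalSubmatrix (A : Matrix α α (ZMod 2)) (U : Finset α) :
    Matrix U U (ZMod 2) :=
  A.submatrix (fun i => (i : α)) (fun i => (i : α))

/-- `U` is nondegenerate for `A`: the principal submatrix `A_U` is invertible over `F₂`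
(the empty submatrix has determinant `1`, hence is invertible by convention). -/
def Nondeg (A : Matrix α α (ZMod 2)) (U : Finset α) : Prop :=
  IsUnit (principalSubmatrix A U).det

/-- Twist of a collection of feasible sets by a subset `T`:
`Φ * T = {φ ∆ T : φ ∈ Φ}`. -/
def twist (Φ : Set (Finset α)) (T : Finset α) : Set (Finset α) :=
  {ψ | ∃ φ ∈ Φ, ψ = φ ∆ T}

/-- A binary delta-matroid on ground set `E`: a twist of the nondegeneracy set system of a
symmetric matrix over `F₂` (the matrix is indexed by the ambient type; only its `E × E`
block is ever used, since only principal submatrices `A_U` with `U ⊆ E` occur). -/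
def IsBinaryDeltaMatroid (E : Finset α) (Φ : Set (Finset α)) : Prop :=
  ∃ (A : Matrix α α (ZMod 2)) (T : Finset α), A.IsSymm ∧ T ⊆ E ∧
    Φ = {ψ | ∃ U : Finset α, U ⊆ E ∧ Nondeg A U ∧ ψ = U ∆ T}

/-- Feasible sets of the deletion `D ∖ e`. -/
def delSet (Φ : Set (Finset α)) (e : α) : Set (Finset α) :=
  {φ ∈ Φ | e ∉ φ}

/-- Feasible sets of the contraction `D / e`. -/
def conSet (Φ : Set (Finset α)) (e : α) : Set (Finset α) :=
  {ψ | ∃ φ ∈ Φ, e ∈ φ ∧ ψ = φ.erase e}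

/-- Feasible sets of the handle slide (second Vassiliev move) of `a` over `b`:
`Φ ∆ {φ ∪ {a} : φ ⊆ E ∖ {a, b}, φ ∪ {b} ∈ Φ}`. -/
def slideSet (E : Finset α) (Φ : Set (Finset α)) (a b : α) : Set (Finset α) :=
  Φ ∆ {ψ | ∃ φ : Finset α, φ ⊆ E \ {a, b} ∧ φ ∪ {b} ∈ Φ ∧ ψ = φ ∪ {a}}

/-- Feasible sets of the first Vassiliev move (exchange of handle ends):
`D\'_{ab} = ((D * {b})~_{ab}) * {b}`. -/
def firstMove (E : Finset α) (Φ : Set (Finset α)) (a b : α) : Set (Finset α) :=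
  twist (slideSet E (twist Φ {b}) a b) {b}

/-!
If `A_U` is invertible, the principal pivot transform `B = A * U` has the principal minors
`det B_W = det A_{U ∆ W} / det A_U` (Tucker), so the exchange axiom for `A` at `U` becomes the
exchange axiom for `B` at `∅`. There it concerns a single column: an invertible `B_W` with `e ∈ W`
has a unit `B f e` with `f ∈ W`. If `B e e` is a unit, `{e}` is nondegenerate; otherwise
`B e e * B f f - B e f * B f e` is a unit of the local ring of coefficients, because `B e f` is a
unit along with `B f e`. Pivoting destroys the symmetry of `A` outside characteristic two, but it
preserves symmetry up to rescaling rows and columns by units, which is enough for this last step.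
-/

section PrincipalMinor

variable {ι V R : Type*} [DecidableEq ι] [DecidableEq V] [CommRing R]

/-- The principal minor `det A_U` of `A` on the index set `U`. Only `U` has to be finite. -/
def principalMinor (A : Matrix V V R) (U : Finset V) : R :=
  (A.submatrix (fun i : U => (i : V)) (fun i : U => (i : V))).det

theorem principalMinor_empty (A : Matrix V V R) : principalMinor A ∅ = 1 :=
  Matrix.det_isEmpty

theorem principalMinor_univ [Fintype V] (A : Matrix V V R) :
    principalMinor A Finset.univ = A.det :=
  Matrix.det_submatrix_equiv_self (Equiv.subtypeUnivEquiv Finset.mem_univ) A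

theorem principalMinor_image (A : Matrix V V R) {f : ι → V} (hf : f.Injective) (U : Finset ι) :
    principalMinor A (U.image f) = principalMinor (A.submatrix f f) U := by
  have hmap : U.image f = U.map ⟨f, hf⟩ := (Finset.map_eq_image ⟨f, hf⟩ U).symm
  rw [hmap]
  exact (Matrix.det_submatrix_equiv_self (U.equivMap ⟨f, hf⟩) _).symm

theorem principalMinor_singleton (A : Matrix V V R) (i : V) : principalMinor A {i} = A i i :=
  Matrix.det_unique _

theorem principalMinor_pair (A : Matrix V V R) {i j : V} (hij : i ≠ j) :
    principalMinor A {i, j} = A i i * A j j - A i j * A j i := by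
  have hinj : Function.Injective ![i, j] := by
    simp [Function.Injective, Fin.forall_fin_two, hij, hij.symm]
  have himage : ({i, j} : Finset V) = Finset.univ.image ![i, j] := by
    ext; simp [eq_comm]
  rw [himage, principalMinor_image A hinj, principalMinor_univ, Matrix.det_fin_two]
  simp

theorem exists_isUnit_apply_of_isUnit_principalMinor [IsLocalRing R] {A : Matrix V V R}
    {U : Finset V} (hU : IsUnit (principalMinor A U)) {e : V} (he : e ∈ U) :
    ∃ f ∈ U, IsUnit (A f e) := by
  set M := A.submatrix (fun i : U => (i : V)) (fun i : U => (i : V))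
  have hsum : ∑ f, M⁻¹ ⟨e, he⟩ f * M f ⟨e, he⟩ = 1 := by
    rw [← Matrix.mul_apply, Matrix.nonsing_inv_mul M hU, Matrix.one_apply_eq]
  obtain ⟨f, -, hf⟩ := IsLocalRing.exists_of_isUnit_sum (hsum ▸ isUnit_one)
  exact ⟨f, f.2, isUnit_of_mul_isUnit_right hf⟩

end PrincipalMinor

section PrincipalPivot

variable {V R : Type*} [DecidableEq V] [CommRing R]

/-- The matrix whose rows indexed by `U` are those of `A` and whose other rows are those of the
identity matrix. Applied to `x` it gives the coordinates `(A x) i` for `i ∈ U` and `x i` for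
`i ∉ U`, so that pivoting on `U` exchanges the roles of `U` and its complement. -/
def mixedRows (A : Matrix V V R) (U : Finset V) : Matrix V V R :=
  Matrix.of fun i j => if i ∈ U then A i j else (1 : Matrix V V R) i j

variable [Fintype V]

theorem mixedRows_mul_apply (A M : Matrix V V R) (U : Finset V) (i j : V) :
    (mixedRows A U * M) i j = if i ∈ U then (A * M) i j else M i j := by
  by_cases hi : i ∈ U
  · simp [mixedRows, Matrix.mul_apply, hi]
  · simp [mixedRows, Matrix.mul_apply, Matrix.one_apply, hi]

theorem det_mixedRows (A : Matrix V V R) (U : Finset V) :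
    (mixedRows A U).det = principalMinor A U := by
  have hzero : ∀ i ∉ U, ∀ j ∈ U, mixedRows A U i j = 0 := fun i hi j hj => by
    simp [mixedRows, hi, (ne_of_mem_of_not_mem hj hi).symm]
  have hdiag : (mixedRows A U).toSquareBlockProp (· ∈ U) =
      A.submatrix (fun i : U => (i : V)) (fun i : U => (i : V)) := by
    ext i j
    simp [mixedRows, Matrix.toSquareBlockProp_def]
  have hcompl : (mixedRows A U).toSquareBlockProp (· ∉ U) = 1 := by
    ext i j
    simp [mixedRows, Matrix.toSquareBlockProp_def, i.2, Matrix.one_apply, Subtype.ext_iff]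
  rw [Matrix.twoBlockTriangular_det _ (· ∈ U) hzero, hdiag, hcompl, Matrix.det_one, mul_one,
    principalMinor]
  congr!

/-- The principal pivot transform of `A` on `U`: it sends the vector with coordinates `(A x) i` for
`i ∈ U` and `x i` for `i ∉ U` to the vector with coordinates `x i` for `i ∈ U` and `(A x) i` for
`i ∉ U`. It has this meaning only if `A_U` is invertible, because of the junk values of `⁻¹`. -/
noncomputable def principalPivot (A : Matrix V V R) (U : Finset V) : Matrix V V R :=
  mixedRows A Uᶜ * (mixedRows A U)⁻¹

theorem principalPivot_mul_mixedRows {A : Matrix V V R} {U : Finset V}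
    (hU : IsUnit (principalMinor A U)) :
    principalPivot A U * mixedRows A U = mixedRows A Uᶜ :=
  Matrix.nonsing_inv_mul_cancel_right _ _ (det_mixedRows A U ▸ hU)

theorem mixedRows_principalPivot_mul {A : Matrix V V R} {U : Finset V}
    (hU : IsUnit (principalMinor A U)) (W : Finset V) :
    mixedRows (principalPivot A U) W * mixedRows A U = mixedRows A (U ∆ W) := by
  ext i j
  rw [mixedRows_mul_apply, principalPivot_mul_mixedRows hU]
  by_cases hiU : i ∈ U <;> by_cases hiW : i ∈ W <;>
    simp [mixedRows, Finset.mem_symmDiff, hiU, hiW]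

theorem principalMinor_principalPivot_mul {A : Matrix V V R} {U : Finset V}
    (hU : IsUnit (principalMinor A U)) (W : Finset V) :
    principalMinor (principalPivot A U) W * principalMinor A U = principalMinor A (U ∆ W) := by
  simp only [← det_mixedRows, ← Matrix.det_mul, mixedRows_principalPivot_mul hU]

theorem isUnit_principalMinor_principalPivot_iff {A : Matrix V V R} {U : Finset V}
    (hU : IsUnit (principalMinor A U)) (W : Finset V) :
    IsUnit (principalMinor (principalPivot A U) W) ↔ IsUnit (principalMinor A (U ∆ W)) := by
  rw [← principalMinor_principalPivot_mul hU W, hU.mul_right_iff]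

end PrincipalPivot

section QuasiSymm

open scoped Matrix

variable {ι V R : Type*} [CommRing R]

/-- Symmetry up to rescaling rows and columns by units, `diagonal ε * A = Aᵀ * diagonal δ`.
Symmetric matrices (`ε = δ = 1`) and skew-symmetric ones (`ε = 1`, `δ = -1`) are examples. Unlike
symmetry, this property is inherited by principal pivot transforms in any characteristic. -/
def IsQuasiSymm (A : Matrix V V R) : Prop :=
  ∃ ε δ : V → Rˣ, ∀ i j, ε i * A i j = A j i * δ j

theorem isQuasiSymm_of_isSymm {A : Matrix V V R} (hA : A.IsSymm) : IsQuasiSymm A :=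
  ⟨1, 1, fun i j => by simp [hA.apply i j]⟩

theorem IsQuasiSymm.submatrix {A : Matrix V V R} (hA : IsQuasiSymm A) (f : ι → V) :
    IsQuasiSymm (A.submatrix f f) :=
  let ⟨ε, δ, h⟩ := hA
  ⟨ε ∘ f, δ ∘ f, fun i j => h (f i) (f j)⟩

theorem IsQuasiSymm.isUnit_apply_comm {A : Matrix V V R} (hA : IsQuasiSymm A) (i j : V) :
    IsUnit (A i j) ↔ IsUnit (A j i) := by
  obtain ⟨ε, δ, h⟩ := hA
  rw [← Units.isUnit_units_mul (ε i), h, Units.isUnit_mul_units]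

variable [DecidableEq V]

-- `h` says `∑ i, ε i * x i * (A y) i = ∑ i, (A x) i * δ i * y i`; moving the terms with `i ∈ U` to
-- the other side produces the signs.
theorem transpose_mixedRows_mul_diagonal_mul [Fintype V] {A : Matrix V V R} {ε δ : V → Rˣ}
    (h : ∀ i j, ε i * A i j = A j i * δ j) (U : Finset V) :
    (mixedRows A U)ᵀ * (Matrix.diagonal (fun i => (U.piecewise (-δ) ε i : R)) *
        mixedRows A Uᶜ) =
      (mixedRows A Uᶜ)ᵀ * (Matrix.diagonal (fun i => (U.piecewise (-ε) δ i : R)) *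
        mixedRows A U) := by
  ext j k
  have hterm (i : V) :
      mixedRows A U i j * (U.piecewise (-δ) ε i * mixedRows A Uᶜ i k) -
        mixedRows A Uᶜ i j * (U.piecewise (-ε) δ i * mixedRows A U i k) =
      (1 : Matrix V V R) i j * (ε i * A i k) - A i j * δ i * (1 : Matrix V V R) i k := by
    by_cases hi : i ∈ U <;> simp [mixedRows, hi] <;> ring
  rw [← sub_eq_zero, Matrix.mul_apply, Matrix.mul_apply, ← Finset.sum_sub_distrib]
  simp only [Matrix.transpose_apply, Matrix.diagonal_mul, hterm]
  simp [Finset.sum_sub_distrib, Matrix.one_apply, h]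

theorem isQuasiSymm_principalPivot [Fintype V] {A : Matrix V V R} (hA : IsQuasiSymm A)
    {U : Finset V} (hU : IsUnit (principalMinor A U)) :
    IsQuasiSymm (principalPivot A U) := by
  obtain ⟨ε, δ, h⟩ := hA
  set P := mixedRows A U
  set Q := mixedRows A Uᶜ
  set D := Matrix.diagonal (fun i => (U.piecewise (-δ) ε i : R))
  set D' := Matrix.diagonal (fun i => (U.piecewise (-ε) δ i : R))
  have hP : IsUnit P.det := det_mixedRows A U ▸ hU
  have hPQ : Pᵀ * (D * Q) = Qᵀ * (D' * P) :=
    transpose_mixedRows_mul_diagonal_mul h U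
  have hpivot : D * (Q * P⁻¹) = (Q * P⁻¹)ᵀ * D' := by
    calc D * (Q * P⁻¹) = (P * P⁻¹)ᵀ * (D * Q) * P⁻¹ := by
          rw [Matrix.mul_nonsing_inv P hP, Matrix.transpose_one, Matrix.one_mul, Matrix.mul_assoc]
      _ = P⁻¹ᵀ * (Pᵀ * (D * Q)) * P⁻¹ := by
          rw [Matrix.transpose_mul, Matrix.mul_assoc P⁻¹ᵀ]
      _ = (Q * P⁻¹)ᵀ * D' * (P * P⁻¹) := by
          simp only [hPQ, Matrix.transpose_mul, Matrix.mul_assoc]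
      _ = (Q * P⁻¹)ᵀ * D' := by rw [Matrix.mul_nonsing_inv P hP, Matrix.mul_one]
  refine ⟨U.piecewise (-δ) ε, U.piecewise (-ε) δ, fun i j => ?_⟩
  simpa only [principalPivot, D, D', Matrix.diagonal_mul, Matrix.mul_diagonal,
    Matrix.transpose_apply] using congr_fun₂ hpivot i j

theorem IsQuasiSymm.exists_isUnit_principalMinor_pair [IsLocalRing R] {A : Matrix V V R}
    (hA : IsQuasiSymm A) {U : Finset V} (hU : IsUnit (principalMinor A U)) {e : V} (he : e ∈ U) :
    ∃ f ∈ U, IsUnit (principalMinor A {e, f}) := by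
  by_cases hee : IsUnit (A e e)
  · exact ⟨e, he, by rwa [Finset.pair_eq_singleton, principalMinor_singleton]⟩
  obtain ⟨f, hf, hfe⟩ := exists_isUnit_apply_of_isUnit_principalMinor hU he
  have hef : e ≠ f := by rintro rfl; exact hee hfe
  have hoff : IsUnit (A e f * A f e) := ((hA.isUnit_apply_comm e f).2 hfe).mul hfe
  have hdiag : ¬IsUnit (A e e * A f f) := fun h => hee (isUnit_of_mul_isUnit_left h)
  refine ⟨f, hf, ?_⟩
  have hadd : IsUnit (A e e * A f f + -principalMinor A {e, f}) := by
    rwa [principalMinor_pair A hef, neg_sub, add_sub_cancel]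
  exact (IsUnit.neg_iff _).1
    ((IsLocalRing.isUnit_or_isUnit_of_isUnit_add hadd).resolve_left hdiag)

end QuasiSymm

section SymmetricExchange

variable {V R : Type*} [DecidableEq V] [CommRing R] [IsLocalRing R]

theorem IsQuasiSymm.symmetric_exchange_of_finite [Finite V] {A : Matrix V V R}
    (hA : IsQuasiSymm A) {U₁ U₂ : Finset V} (h₁ : IsUnit (principalMinor A U₁))
    (h₂ : IsUnit (principalMinor A U₂)) {e : V} (he : e ∈ U₁ ∆ U₂) :
    ∃ f ∈ U₁ ∆ U₂, IsUnit (principalMinor A (U₁ ∆ {e, f})) := by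
  cases nonempty_fintype V
  have hW : IsUnit (principalMinor (principalPivot A U₁) (U₁ ∆ U₂)) := by
    rwa [isUnit_principalMinor_principalPivot_iff h₁, symmDiff_symmDiff_cancel_left]
  obtain ⟨f, hf, hef⟩ := (isQuasiSymm_principalPivot hA h₁).exists_isUnit_principalMinor_pair hW he
  exact ⟨f, hf, (isUnit_principalMinor_principalPivot_iff h₁ _).1 hef⟩

theorem IsQuasiSymm.symmetric_exchange {A : Matrix V V R}
    (hA : IsQuasiSymm A) {U₁ U₂ : Finset V} (h₁ : IsUnit (principalMinor A U₁))
    (h₂ : IsUnit (principalMinor A U₂)) {e : V} (he : e ∈ U₁ ∆ U₂) :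
    ∃ f ∈ U₁ ∆ U₂, IsUnit (principalMinor A (U₁ ∆ {e, f})) := by
  obtain ⟨S, hS₁, hS₂⟩ : ∃ S, U₁ ⊆ S ∧ U₂ ⊆ S :=
    ⟨U₁ ∪ U₂, Finset.subset_union_left, Finset.subset_union_right⟩
  have hval : Function.Injective (Subtype.val : S → V) := Subtype.val_injective
  rw [← S.attach_image_val, Finset.subset_image_iff] at hS₁ hS₂
  obtain ⟨W₁, -, rfl⟩ := hS₁
  obtain ⟨W₂, -, rfl⟩ := hS₂
  rw [principalMinor_image A hval] at h₁ h₂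
  rw [← Finset.image_symmDiff _ _ hval] at he ⊢
  obtain ⟨e, heW, rfl⟩ := Finset.mem_image.1 he
  obtain ⟨f, hf, hef⟩ := (hA.submatrix Subtype.val).symmetric_exchange_of_finite h₁ h₂ heW
  refine ⟨f, Finset.mem_image_of_mem _ hf, ?_⟩
  rwa [← Finset.image_singleton, ← Finset.image_insert, ← Finset.image_symmDiff _ _ hval,
    principalMinor_image A hval]

theorem twist_nondegeneracy_isDeltaMatroid_general {A : Matrix V V R} (hA : IsQuasiSymm A)
    {E T : Finset V} (hT : T ⊆ E) :
    IsDeltaMatroid E (twist {U | U ⊆ E ∧ IsUnit (principalMinor A U)} T) := by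
  refine ⟨⟨∅ ∆ T, ∅, ⟨Finset.empty_subset E, by simp [principalMinor_empty]⟩, rfl⟩, ?_, ?_⟩
  · rintro _ ⟨U, ⟨hU, -⟩, rfl⟩
    exact Finset.symmDiff_subset_union.trans (Finset.union_subset hU hT)
  · rintro _ ⟨U₁, ⟨hU₁, h₁⟩, rfl⟩ _ ⟨U₂, ⟨hU₂, h₂⟩, rfl⟩ e he
    have hcancel : (U₁ ∆ T) ∆ (U₂ ∆ T) = U₁ ∆ U₂ := by
      rw [symmDiff_symmDiff_symmDiff_comm, symmDiff_self, symmDiff_bot]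
    rw [hcancel] at he ⊢
    have hsub : U₁ ∆ U₂ ⊆ E := Finset.symmDiff_subset_union.trans (Finset.union_subset hU₁ hU₂)
    obtain ⟨f, hf, hef⟩ := hA.symmetric_exchange h₁ h₂ he
    have hpair : {e, f} ⊆ E := Finset.insert_subset (hsub he) (by simpa using hsub hf)
    exact ⟨f, hf, U₁ ∆ {e, f},
      ⟨Finset.symmDiff_subset_union.trans (Finset.union_subset hU₁ hpair), hef⟩,
      symmDiff_right_comm _ _ _⟩

end SymmetricExchange

/-- Any twist of the nondegeneracy set system of a symmetric matrix over
`F₂` is a delta-matroid; in particular every binary delta-matroid is a delta-matroid. -/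
theorem twist_nondegeneracy_isDeltaMatroid {V : Type*} [Fintype V] [DecidableEq V]
    (A : Matrix V V (ZMod 2)) (hA : A.IsSymm) (T : Finset V) :
    IsDeltaMatroid (Finset.univ : Finset V)
      (twist {U : Finset V | Nondeg A U} T) := by
  simpa [Nondeg, principalSubmatrix, principalMinor] using
    twist_nondegeneracy_isDeltaMatroid_general (isQuasiSymm_of_isSymm hA) (Finset.subset_univ T)
end

section
/- For any set system D = (E; Φ) and any two distinct elements a, b ∈ E, the first and the second Vassiliev moves commute: (D̃_{ab})'_{ab} = (D'_{ab})̃_{ab}. -/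
/-!
Over `𝔽₂`, where `∆` is addition of collections, both moves have the form `Φ ↦ Φ + 1_P · (Φ * T)`
with `T = {a, b}`: for the slide, `P` consists of the sets `φ ∪ {a}` with `φ ⊆ E ∖ {a, b}`; for the
first move, of their twists by `{b}`. Performing two such operations yields the cross term
`1_Q · 1_{P * T} · Φ`. Every set in either `P` contains `a`, which is lost under the twist by `T`,
so the cross term vanishes in both orders and each composite is `Φ + (1_P + 1_Q) · (Φ * T)`.
-/

open scoped symmDiff

variable {α : Type*} [DecidableEq α]

theorem twist_eq_preimage (Φ : Set (Finset α)) (T : Finset α) : twist Φ T = (· ∆ T) ⁻¹' Φ := by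
  ext ψ
  constructor
  · rintro ⟨φ, hφ, rfl⟩
    simpa only [Set.mem_preimage, symmDiff_symmDiff_cancel_right] using hφ
  · exact fun hψ => ⟨ψ ∆ T, hψ, (symmDiff_symmDiff_cancel_right T ψ).symm⟩

theorem mem_twist {Φ : Set (Finset α)} {T ψ : Finset α} : ψ ∈ twist Φ T ↔ ψ ∆ T ∈ Φ := by
  rw [twist_eq_preimage, Set.mem_preimage]

theorem twist_symmDiff (Φ Ψ : Set (Finset α)) (T : Finset α) :
    twist (Φ ∆ Ψ) T = twist Φ T ∆ twist Ψ T := by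
  simp only [twist_eq_preimage, Set.preimage_symmDiff]

theorem twist_inter (Φ Ψ : Set (Finset α)) (T : Finset α) :
    twist (Φ ∩ Ψ) T = twist Φ T ∩ twist Ψ T := by
  simp only [twist_eq_preimage, Set.preimage_inter]

theorem twist_twist (Φ : Set (Finset α)) (S T : Finset α) :
    twist (twist Φ S) T = twist Φ (S ∆ T) := by
  ext ψ
  rw [mem_twist, mem_twist, mem_twist, symmDiff_assoc, symmDiff_comm T]

theorem twist_twist_self (Φ : Set (Finset α)) (T : Finset α) : twist (twist Φ T) T = Φ := by
  ext ψ
  rw [mem_twist, mem_twist, symmDiff_symmDiff_cancel_right]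

theorem twist_right_comm (Φ : Set (Finset α)) (S T : Finset α) :
    twist (twist Φ S) T = twist (twist Φ T) S := by
  rw [twist_twist, twist_twist, symmDiff_comm]

theorem disjoint_twist_left {P Q : Set (Finset α)} {T : Finset α} :
    Disjoint (twist P T) Q ↔ Disjoint P (twist Q T) := by
  rw [← Set.disjoint_preimage_iff (symmDiff_left_involutive T).surjective, ← twist_eq_preimage,
    ← twist_eq_preimage, twist_twist_self]

/-- The sum over `𝔽₂` of `Φ` and the part of its twist by `T` lying in `P`. Both Vassiliev moves are
of this form. -/
def addTwistOn (Φ : Set (Finset α)) (T : Finset α) (P : Set (Finset α)) : Set (Finset α) :=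
  Φ ∆ (twist Φ T ∩ P)

theorem twist_addTwistOn (Φ P : Set (Finset α)) (S T : Finset α) :
    twist (addTwistOn Φ T P) S = addTwistOn (twist Φ S) T (twist P S) := by
  simp only [addTwistOn, twist_symmDiff, twist_inter, twist_right_comm Φ T S]

theorem addTwistOn_addTwistOn (Φ : Set (Finset α)) {T : Finset α} {P Q : Set (Finset α)}
    (hPQ : Disjoint (twist P T) Q) :
    addTwistOn (addTwistOn Φ T P) T Q = addTwistOn Φ T (P ∆ Q) := by
  have twist_inter_eq : twist (addTwistOn Φ T P) T ∩ Q = twist Φ T ∩ Q := by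
    rw [twist_addTwistOn, addTwistOn, twist_twist_self, Set.inter_symmDiff_distrib_right,
      Set.inter_assoc, hPQ.inter_eq, Set.inter_empty, ← Set.bot_eq_empty, symmDiff_bot]
  calc addTwistOn (addTwistOn Φ T P) T Q
      = (Φ ∆ (twist Φ T ∩ P)) ∆ (twist Φ T ∩ Q) := by rw [addTwistOn, twist_inter_eq, addTwistOn]
    _ = addTwistOn Φ T (P ∆ Q) := by
      rw [symmDiff_assoc, ← Set.inter_symmDiff_distrib_left, addTwistOn]

theorem addTwistOn_right_comm (Φ : Set (Finset α)) {T : Finset α} {P Q : Set (Finset α)}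
    (hPQ : Disjoint (twist P T) Q) :
    addTwistOn (addTwistOn Φ T P) T Q = addTwistOn (addTwistOn Φ T Q) T P := by
  have hQP : Disjoint (twist Q T) P := (disjoint_twist_left.1 hPQ).symm
  rw [addTwistOn_addTwistOn Φ hPQ, addTwistOn_addTwistOn Φ hQP, symmDiff_comm]

/-- The collection of all `φ ∪ {a}` with `φ ⊆ E ∖ {a, b}`: the sets whose feasibility may change
when `a` is slid over `b`. -/
def slideDomain (E : Finset α) (a b : α) : Set (Finset α) :=
  (· ∪ {a}) '' {φ | φ ⊆ E \ {a, b}}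

theorem mem_of_mem_slideDomain {E ψ : Finset α} {a b : α} (hψ : ψ ∈ slideDomain E a b) :
    a ∈ ψ := by
  obtain ⟨φ, -, rfl⟩ := hψ
  exact Finset.mem_union_right φ (Finset.mem_singleton_self a)

theorem disjoint_twist_slideDomain (E : Finset α) {a : α} (b : α) {T : Finset α} (ha : a ∈ T) :
    Disjoint (twist (slideDomain E a b) T) (slideDomain E a b) := by
  refine Set.disjoint_left.2 fun ψ hψT hψ => ?_
  have ha_symmDiff : a ∈ ψ ∆ T := mem_of_mem_slideDomain (mem_twist.1 hψT)
  have ha_mem : a ∈ ψ := mem_of_mem_slideDomain hψ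
  simp [Finset.mem_symmDiff, ha, ha_mem] at ha_symmDiff

theorem union_singleton_symmDiff_pair {φ : Finset α} {a b : α} (hab : a ≠ b)
    (hφ : Disjoint φ {a, b}) : (φ ∪ {a}) ∆ {a, b} = φ ∪ {b} := by
  ext x
  grind [Finset.mem_symmDiff, Finset.disjoint_left]

theorem slideSet_eq_addTwistOn (E : Finset α) (Φ : Set (Finset α)) {a b : α} (hab : a ≠ b) :
    slideSet E Φ a b = addTwistOn Φ {a, b} (slideDomain E a b) := by
  have swap {φ : Finset α} (hφ : φ ⊆ E \ {a, b}) : (φ ∪ {a}) ∆ {a, b} = φ ∪ {b} :=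
    union_singleton_symmDiff_pair hab (Finset.disjoint_of_subset_left hφ Finset.sdiff_disjoint)
  unfold slideSet addTwistOn
  congr 1
  ext ψ
  constructor
  · rintro ⟨φ, hφ, hφb, rfl⟩
    exact ⟨mem_twist.2 ((swap hφ).symm ▸ hφb), φ, hφ, rfl⟩
  · rintro ⟨hψ, φ, hφ, rfl⟩
    exact ⟨φ, hφ, swap hφ ▸ mem_twist.1 hψ, rfl⟩

theorem firstMove_eq_addTwistOn (E : Finset α) (Φ : Set (Finset α)) {a b : α} (hab : a ≠ b) :
    firstMove E Φ a b = addTwistOn Φ {a, b} (twist (slideDomain E a b) {b}) := by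
  rw [firstMove, slideSet_eq_addTwistOn E _ hab, twist_addTwistOn, twist_twist_self]

/-- The first and the second Vassiliev moves commute:
`(D~_{ab})\'_{ab} = (D\'_{ab})~_{ab}`. -/
theorem firstMove_slide_comm {α : Type*} [DecidableEq α] (E : Finset α)
    (Φ : Set (Finset α)) (a b : α) (hne : Φ.Nonempty) (hsub : ∀ φ ∈ Φ, φ ⊆ E)
    (ha : a ∈ E) (hb : b ∈ E) (hab : a ≠ b) :
    firstMove E (slideSet E Φ a b) a b = slideSet E (firstMove E Φ a b) a b := by
  have ha_twist : a ∈ ({a, b} : Finset α) ∆ {b} := by simp [Finset.mem_symmDiff, hab]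
  have hdisj : Disjoint (twist (slideDomain E a b) {a, b}) (twist (slideDomain E a b) {b}) := by
    rw [← disjoint_twist_left, twist_twist]
    exact disjoint_twist_slideDomain E b ha_twist
  simp only [slideSet_eq_addTwistOn E _ hab, firstMove_eq_addTwistOn E _ hab]
  exact addTwistOn_right_comm Φ hdisj
end
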